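/- There exists a constant C depending only on γ, L_max, L_ψ, L_π, L_0 and R_max such that for every d ≥ 1, every N ≥ 2, every k ∈ ℕ and every δ ∈ (0,1/2), with probability at least 1−δ over the design points and all samples ξ_{k,j}, one has sup_{x∈X} |V̂_k^{up}(x) − V*(x)| ≤ C [ γ^k · sup_{x∈X}|V̂_0^{up}(x) − V*(x)| + sup_{x∈X}|V^π(x) − V*(x)| + √( d·log(d|A|/δ) / M_1 ) + √d · ( N^{−1} log(1/δ) log N )^{1/d} ]. -/

import Mathlib

open MeasureTheory

/-- The unit cube `[0,1]^d` in Euclidean space. -/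
def unitCube (d : ℕ) : Set (EuclideanSpace ℝ (Fin d)) :=
  {y | ∀ i, y i ∈ Set.Icc (0 : ℝ) 1}

/-- The metric `ρ((x,a),(x',a')) = ‖x - x'‖ + 1{a ≠ a'}` on `X × A`. -/
noncomputable def rhoCube {d : ℕ} {A : Type*} [DecidableEq A]
    (p q : EuclideanSpace ℝ (Fin d) × A) : ℝ :=
  dist p.1 q.1 + if p.2 = q.2 then 0 else 1

/-- The optimal central interpolant of `g` from its values at the nodes `xs`, with
slope `L`. -/
noncomputable def centralInterp {X : Type*} [MetricSpace X] {N : ℕ} (xs : Fin N → X)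
    (L : ℝ) (g : X → ℝ) (x : X) : ℝ :=
  ((⨆ ℓ : Fin N, (g (xs ℓ) - L * dist x (xs ℓ))) +
    (⨅ ℓ : Fin N, (g (xs ℓ) + L * dist x (xs ℓ)))) / 2

/-- The Monte Carlo step of approximate UVIP. -/
noncomputable def tildeStep {X A Ξ : Type*} (ψ : X → A → Ξ → X) (r : A → X → ℝ)
    (γ : ℝ) (Vpi : X → ℝ) (M1 M2 : ℕ) (V : X → ℝ) (ξs : ℕ → Ξ) (x : X) : ℝ :=
  (M2 : ℝ)⁻¹ * ∑ j ∈ Finset.Ico M1 (M1 + M2),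
    ⨆ a : A, (r a x + γ * (V (ψ x a (ξs j)) - Vpi (ψ x a (ξs j)) +
      (M1 : ℝ)⁻¹ * ∑ l ∈ Finset.range M1, Vpi (ψ x a (ξs l))))

/-- One realization of the approximate UVIP iterates (Algorithm 2). -/
noncomputable def uvipIter {X A Ξ : Type*} [MetricSpace X] (ψ : X → A → Ξ → X)
    (r : A → X → ℝ) (γ : ℝ) (Vpi : X → ℝ) (M1 M2 : ℕ) (LV : ℝ) {N : ℕ}
    (xs : Fin N → X) (V0 : X → ℝ) : ℕ → (ℕ → ℕ → Ξ) → X → ℝ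
  | 0, _ => V0
  | k + 1, ω =>
      centralInterp xs LV
        (tildeStep ψ r γ Vpi M1 M2 (uvipIter ψ r γ Vpi M1 M2 LV xs V0 k ω) (ω k))

/-- Extension of finitely many samples to an `ℕ × ℕ`-indexed family. -/
noncomputable def extendSamples {Ξ : Type*} [Nonempty Ξ] (k M : ℕ)
    (ω : Fin k → Fin M → Ξ) : ℕ → ℕ → Ξ := fun i j =>
  if h : i < k ∧ j < M then ω ⟨i, h.1⟩ ⟨j, h.2⟩ else Classical.arbitrary Ξ

/-!
Every iterate is an `LV`-Lipschitz interpolant, so one iteration contracts the distance to `V*` by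
the factor `γ`, up to three errors: `2γ ‖V^π - V*‖` from the imperfect control variate, the uniform
Monte Carlo error of `V^π ∘ ψ`, and `LV` times the covering radius of the design. The Monte Carlo
error is bounded by chaining Hoeffding's inequality along dyadic nets of the cube, the covering
radius by the probability that some cell of a grid contains no design point.

A plain union bound over the `k` iterations would cost a factor `log k`. Instead, the `j`-th
iteration from the end is allowed a Monte Carlo error proportional to `j + 1`, which it exceeds with
probability at most `δ 2 ^ (-j - 2)`: these weights are summable against the discount `γ ^ j` that
the error of this iteration receives, and the probabilities sum to at most `δ / 2`.
-/

open scoped BigOperators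

section SupremaAndMeans

variable {ι : Type*} {f g : ι → ℝ} {c : ℝ}

lemma ciSup_le_ciSup_add [Finite ι] [Nonempty ι] (h : ∀ i, f i ≤ g i + c) :
    ⨆ i, f i ≤ (⨆ i, g i) + c :=
  ciSup_le fun i => (h i).trans <|
    add_le_add_left (le_ciSup (Set.finite_range g).bddAbove i) c

lemma ciInf_le_ciInf_add [Finite ι] [Nonempty ι] (h : ∀ i, f i ≤ g i + c) :
    ⨅ i, f i ≤ (⨅ i, g i) + c :=
  sub_le_iff_le_add.mp <| le_ciInf fun i => sub_le_iff_le_add.mpr <|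
    (ciInf_le (Set.finite_range f).bddBelow i).trans (h i)

lemma abs_ciSup_sub_ciSup_le [Finite ι] [Nonempty ι] (h : ∀ i, |f i - g i| ≤ c) :
    |(⨆ i, f i) - ⨆ i, g i| ≤ c := by
  simp only [abs_sub_le_iff, sub_le_iff_le_add'] at h ⊢
  exact ⟨ciSup_le_ciSup_add fun i => (h i).1, ciSup_le_ciSup_add fun i => (h i).2⟩

lemma abs_ciInf_sub_ciInf_le [Finite ι] [Nonempty ι] (h : ∀ i, |f i - g i| ≤ c) :
    |(⨅ i, f i) - ⨅ i, g i| ≤ c := by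
  simp only [abs_sub_le_iff, sub_le_iff_le_add'] at h ⊢
  exact ⟨ciInf_le_ciInf_add fun i => (h i).1, ciInf_le_ciInf_add fun i => (h i).2⟩

lemma abs_expect_sub_expect_le {s : Finset ι} (hs : s.Nonempty)
    (h : ∀ i ∈ s, |f i - g i| ≤ c) : |𝔼 i ∈ s, f i - 𝔼 i ∈ s, g i| ≤ c := by
  rw [← Finset.expect_sub_distrib]
  exact (Finset.abs_expect_le _ _).trans (Finset.expect_le hs h)

end SupremaAndMeans

section Interpolation

/-- The points `xs` lie in `Q` and form a `ρ`-net of it: the property of a design on which the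
interpolation error depends. -/
structure IsInternalCover {X ι : Type*} [PseudoMetricSpace X] (Q : Set X) (xs : ι → X) (ρ : ℝ) :
    Prop where
  mem : ∀ l, xs l ∈ Q
  exists_dist_le : ∀ x ∈ Q, ∃ l, dist x (xs l) ≤ ρ

lemma IsInternalCover.mono {X ι : Type*} [PseudoMetricSpace X] {Q : Set X} {xs : ι → X} {ρ ρ' : ℝ}
    (h : IsInternalCover Q xs ρ) (hρ : ρ ≤ ρ') : IsInternalCover Q xs ρ' :=
  ⟨h.mem, fun x hx => (h.exists_dist_le x hx).imp fun _ hl => hl.trans hρ⟩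

variable {X : Type*} [MetricSpace X] {N : ℕ} [NeZero N] {xs : Fin N → X} {L ρ : ℝ}

lemma abs_centralInterp_sub_centralInterp_le (xs : Fin N → X) (hL : 0 ≤ L) (g : X → ℝ) (x y : X) :
    |centralInterp xs L g x - centralInterp xs L g y| ≤ L * dist x y := by
  have hcone (l : Fin N) : |L * dist x (xs l) - L * dist y (xs l)| ≤ L * dist x y := by
    rw [← mul_sub, abs_mul, abs_of_nonneg hL]
    exact mul_le_mul_of_nonneg_left (abs_dist_sub_le x y (xs l)) hL
  have hsup : |(⨆ l, (g (xs l) - L * dist x (xs l))) - ⨆ l, (g (xs l) - L * dist y (xs l))| ≤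
      L * dist x y :=
    abs_ciSup_sub_ciSup_le fun l => by
      rw [sub_sub_sub_cancel_left, abs_sub_comm]
      exact hcone l
  have hinf : |(⨅ l, (g (xs l) + L * dist x (xs l))) - ⨅ l, (g (xs l) + L * dist y (xs l))| ≤
      L * dist x y :=
    abs_ciInf_sub_ciInf_le fun l => by
      rw [add_sub_add_left_eq_sub]
      exact hcone l
  unfold centralInterp
  rw [abs_le] at hsup hinf ⊢
  constructor <;> linarith

lemma abs_centralInterp_sub_le {Q : Set X} (hxs : IsInternalCover Q xs ρ) (hL : 0 ≤ L) {g : X → ℝ}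
    (hg : ∀ x ∈ Q, ∀ y ∈ Q, |g x - g y| ≤ L * dist x y) {x : X} (hx : x ∈ Q) :
    |centralInterp xs L g x - g x| ≤ L * ρ := by
  have hnode (l : Fin N) := abs_le.mp (hg x hx (xs l) (hxs.mem l))
  obtain ⟨l, hl⟩ := hxs.exists_dist_le x hx
  have hlρ : L * dist x (xs l) ≤ L * ρ := mul_le_mul_of_nonneg_left hl hL
  have hlower : ⨆ l, (g (xs l) - L * dist x (xs l)) ≤ g x :=
    ciSup_le fun i => by linarith [hnode i]
  have hupper : g x ≤ ⨅ l, (g (xs l) + L * dist x (xs l)) :=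
    le_ciInf fun i => by linarith [hnode i]
  have hlower_ge := le_ciSup (Set.finite_range fun l => g (xs l) - L * dist x (xs l)).bddAbove l
  have hupper_le := ciInf_le (Set.finite_range fun l => g (xs l) + L * dist x (xs l)).bddBelow l
  unfold centralInterp
  rw [abs_le]
  constructor <;> linarith [hnode l]

end Interpolation

section DiscountedSums

variable {γ : ℝ}

lemma sum_range_add_one_mul_geometric_le (hγ0 : 0 ≤ γ) (hγ1 : γ < 1) (n : ℕ) :
    ∑ i ∈ Finset.range n, ((i : ℝ) + 1) * γ ^ i ≤ (1 - γ)⁻¹ ^ 2 := by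
  have hsum : HasSum (fun i : ℕ => ((i : ℝ) + 1) * γ ^ i) ((1 - γ)⁻¹ ^ 2) := by
    simpa using hasSum_choose_mul_geometric_of_norm_lt_one 1
      (show ‖γ‖ < 1 by rwa [Real.norm_of_nonneg hγ0])
  exact sum_le_hasSum _ (fun _ _ => by positivity) hsum

lemma sum_geometric_mul_add_le (hγ0 : 0 ≤ γ) (hγ1 : γ < 1) {c G : ℝ} (hc : 0 ≤ c) (hG : 0 ≤ G)
    (k : ℕ) :
    ∑ i ∈ Finset.range k, γ ^ (k - 1 - i) * (c + G * (((k - 1 - i : ℕ) : ℝ) + 1)) ≤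
      c * (1 - γ)⁻¹ + G * (1 - γ)⁻¹ ^ 2 := by
  have hgeom : ∑ i ∈ Finset.range k, γ ^ i ≤ (1 - γ)⁻¹ :=
    sum_le_hasSum _ (fun _ _ => by positivity) (hasSum_geometric_of_lt_one hγ0 hγ1)
  calc ∑ i ∈ Finset.range k, γ ^ (k - 1 - i) * (c + G * (((k - 1 - i : ℕ) : ℝ) + 1))
      = ∑ j ∈ Finset.range k, γ ^ j * (c + G * ((j : ℝ) + 1)) :=
        Finset.sum_range_reflect (fun j => γ ^ j * (c + G * ((j : ℝ) + 1))) k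
    _ = c * ∑ j ∈ Finset.range k, γ ^ j + G * ∑ j ∈ Finset.range k, ((j : ℝ) + 1) * γ ^ j := by
        rw [Finset.mul_sum, Finset.mul_sum, ← Finset.sum_add_distrib]
        exact Finset.sum_congr rfl fun j _ => by ring
    _ ≤ c * (1 - γ)⁻¹ + G * (1 - γ)⁻¹ ^ 2 := by
        gcongr
        exact sum_range_add_one_mul_geometric_le hγ0 hγ1 k

lemma forall_le_pow_mul_add_sum {X : Type*} {Q : Set X} {F : ℕ → X → ℝ} {E : ℝ} {b : ℕ → ℝ}
    {k : ℕ} (hE : ∀ x ∈ Q, F 0 x ≤ E)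
    (hstep : ∀ i < k, ∀ B, (∀ x ∈ Q, F i x ≤ B) → ∀ x ∈ Q, F (i + 1) x ≤ γ * B + b i) :
    ∀ x ∈ Q, F k x ≤ γ ^ k * E + ∑ i ∈ Finset.range k, γ ^ (k - 1 - i) * b i := by
  induction k with
  | zero => simpa using hE
  | succ k ih =>
    intro x hx
    refine (hstep k k.lt_succ_self _ (ih fun i hi => hstep i (hi.trans k.lt_succ_self)) x
      hx).trans_eq ?_
    have hdiscount : ∑ i ∈ Finset.range k, γ ^ (k + 1 - 1 - i) * b i =
        γ * ∑ i ∈ Finset.range k, γ ^ (k - 1 - i) * b i := by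
      rw [Finset.mul_sum]
      refine Finset.sum_congr rfl fun i hi => ?_
      have hi : k + 1 - 1 - i = k - 1 - i + 1 := by have := Finset.mem_range.mp hi; omega
      rw [hi, pow_succ', mul_assoc]
    rw [Finset.sum_range_succ, hdiscount, add_tsub_cancel_right, tsub_self]
    ring

end DiscountedSums

section MonteCarlo

open ProbabilityTheory

variable {Ξ ι Ω : Type*} [MeasurableSpace Ξ] [MeasurableSpace Ω] [Fintype ι] {P : Measure Ξ}
  {μ : Measure Ω} {X : ι → Ω → Ξ} {f g : Ξ → ℝ} {b u : ℝ}

/-- The error of the Monte Carlo estimate of `∫ g dP` from the sample `ξ`. -/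
noncomputable def empiricalError (P : Measure Ξ) (g : Ξ → ℝ) (ξ : ι → Ξ) : ℝ :=
  𝔼 i, g (ξ i) - ∫ z, g z ∂P

lemma empiricalError_neg (P : Measure Ξ) (g : Ξ → ℝ) (ξ : ι → Ξ) :
    empiricalError P (fun z => -g z) ξ = -empiricalError P g ξ := by
  simp only [empiricalError, Finset.expect_neg_distrib, integral_neg]
  ring

lemma empiricalError_sub (hf : Integrable f P) (hg : Integrable g P) (ξ : ι → Ξ) :
    empiricalError P (fun z => f z - g z) ξ = empiricalError P f ξ - empiricalError P g ξ := by
  simp only [empiricalError, Finset.expect_sub_distrib, integral_sub hf hg]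
  ring

lemma card_mul_empiricalError [Nonempty ι] (P : Measure Ξ) (g : Ξ → ℝ) (ξ : ι → Ξ) :
    Fintype.card ι * empiricalError P g ξ = ∑ i, (g (ξ i) - ∫ z, g z ∂P) := by
  rw [empiricalError, mul_sub, Fintype.card_mul_expect, Finset.sum_sub_distrib, Finset.sum_const,
    Finset.card_univ, nsmul_eq_mul]

lemma integrable_of_abs_le [IsFiniteMeasure P] (hg : Measurable g) (hgb : ∀ z, |g z| ≤ b) :
    Integrable g P :=
  .of_bound hg.aestronglyMeasurable b (.of_forall hgb)

lemma abs_empiricalError_le_two_mul [Nonempty ι] [IsProbabilityMeasure P] (hgb : ∀ z, |g z| ≤ b)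
    (ξ : ι → Ξ) : |empiricalError P g ξ| ≤ 2 * b := by
  have hmean : |𝔼 i, g (ξ i)| ≤ b :=
    (Finset.abs_expect_le _ _).trans
      (Finset.expect_le Finset.univ_nonempty fun i _ => hgb (ξ i))
  have hintegral : |∫ z, g z ∂P| ≤ b := by
    simpa using norm_integral_le_of_norm_le_const (.of_forall hgb : ∀ᵐ z ∂P, ‖g z‖ ≤ b)
  calc |empiricalError P g ξ| ≤ |𝔼 i, g (ξ i)| + |∫ z, g z ∂P| := abs_sub _ _
    _ ≤ 2 * b := by linarith

lemma hasSubgaussianMGF_comp_sub_integral {Y : Ω → Ξ} [IsProbabilityMeasure P] (hY : HasLaw Y P μ)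
    (hg : Measurable g) (hgb : ∀ z, |g z| ≤ b) :
    HasSubgaussianMGF (fun ω => g (Y ω) - ∫ z, g z ∂P) ((‖b - -b‖₊ / 2) ^ 2) μ := by
  have hP : HasSubgaussianMGF (fun z => g z - ∫ z, g z ∂P) ((‖b - -b‖₊ / 2) ^ 2) (μ.map Y) := by
    rw [hY.map_eq]
    exact hasSubgaussianMGF_of_mem_Icc hg.aemeasurable (.of_forall fun z => abs_le.mp (hgb z))
  exact .of_map hY.aemeasurable hP

lemma measure_le_empiricalError_le [Nonempty ι] [IsProbabilityMeasure P] [IsProbabilityMeasure μ]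
    (hlaw : ∀ i, HasLaw (X i) P μ) (hind : iIndepFun X μ) (hg : Measurable g) (hb : 0 < b)
    (hgb : ∀ z, |g z| ≤ b) (hu : 0 ≤ u) :
    μ {ω | b * √(2 * u / Fintype.card ι) ≤ empiricalError P g fun i => X i ω} ≤
      ENNReal.ofReal (Real.exp (-u)) := by
  have hcard : (0 : ℝ) < Fintype.card ι := mod_cast Fintype.card_pos
  have hvariance :
      ((∑ _i : ι, (‖b - -b‖₊ / 2) ^ 2 : NNReal) : ℝ) = Fintype.card ι * b ^ 2 := by
    rw [Finset.sum_const, Finset.card_univ, nsmul_eq_mul]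
    push_cast
    rw [Real.norm_eq_abs, div_pow, sq_abs]
    ring
  have htail := HasSubgaussianMGF.measure_sum_ge_le_of_iIndepFun (s := Finset.univ)
    (hind.comp (fun _ z => g z - ∫ z, g z ∂P) fun _ => hg.sub_const _)
    (fun i _ => hasSubgaussianMGF_comp_sub_integral (hlaw i) hg hgb)
    (ε := Fintype.card ι * (b * √(2 * u / Fintype.card ι))) (by positivity)
  simp only [Function.comp_apply, ← card_mul_empiricalError P g fun i => X i _,
    mul_le_mul_iff_right₀ hcard, hvariance] at htail
  rw [← ofReal_measureReal]
  refine ENNReal.ofReal_le_ofReal (htail.trans_eq ?_)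
  rw [mul_pow, mul_pow, Real.sq_sqrt (by positivity)]
  field_simp

lemma measure_lt_abs_empiricalError_le [Nonempty ι] [IsProbabilityMeasure P]
    [IsProbabilityMeasure μ] (hlaw : ∀ i, HasLaw (X i) P μ) (hind : iIndepFun X μ)
    (hg : Measurable g) (hb : 0 < b) (hgb : ∀ z, |g z| ≤ b) (hu : 0 ≤ u) :
    μ {ω | b * √(2 * u / Fintype.card ι) < |empiricalError P g fun i => X i ω|} ≤
      ENNReal.ofReal (2 * Real.exp (-u)) := by
  have hupper := measure_le_empiricalError_le hlaw hind hg hb hgb hu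
  have hlower := measure_le_empiricalError_le hlaw hind hg.neg hb
    (fun z => (abs_neg (g z)).trans_le (hgb z)) hu
  simp only [Pi.neg_def, empiricalError_neg] at hlower
  rw [two_mul (Real.exp _), ENNReal.ofReal_add (Real.exp_nonneg _) (Real.exp_nonneg _)]
  refine (measure_mono fun ω hω => ?_).trans
    ((measure_union_le _ _).trans (add_le_add hupper hlower))
  rw [Set.mem_ofPred_eq, lt_abs] at hω
  rcases hω with hω | hω
  · exact .inl hω.le
  · exact .inr hω.le

end MonteCarlo

section Chaining

open ProbabilityTheory

/-- Finite subsets of `Q` at the scales `(1 / 2) ^ n`, with a choice for each `n` of an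
approximation of every point of `Q`: the skeleton of a chaining argument. The value of `proj n`
outside `Q` is irrelevant. -/
structure DyadicNet {T : Type*} [PseudoMetricSpace T] (Q : Set T) where
  points : ℕ → Finset T
  proj : ℕ → T → T
  mem_of_mem_points : ∀ {n q}, q ∈ points n → q ∈ Q
  proj_mem : ∀ {x}, x ∈ Q → ∀ n, proj n x ∈ points n
  dist_proj_le : ∀ {x}, x ∈ Q → ∀ n, dist x (proj n x) ≤ (1 / 2) ^ n

namespace DyadicNet

/-- The links of the chain ending at `q`: the telescoping increments of the family `f` along the
successive approximations of `q`. -/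
def link {T Ξ : Type*} [PseudoMetricSpace T] {Q : Set T} (S : DyadicNet Q) (f : T → Ξ → ℝ) :
    ℕ → T → Ξ → ℝ
  | 0, q => f q
  | n + 1, q => fun z => f q z - f (S.proj n q) z

variable {T Ξ ι Ω : Type*} [PseudoMetricSpace T] {Q : Set T} {f : T → Ξ → ℝ} {K : ℝ} {n : ℕ} {q : T}

lemma abs_link_le (S : DyadicNet Q) (hK : 0 ≤ K) (hbound : ∀ x ∈ Q, ∀ z, |f x z| ≤ K)
    (hlip : ∀ x ∈ Q, ∀ y ∈ Q, ∀ z, |f x z - f y z| ≤ K * dist x y) (hq : q ∈ S.points n) (z : Ξ) :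
    |S.link f n q z| ≤ 2 * K * (1 / 2) ^ n := by
  have hqQ := S.mem_of_mem_points hq
  cases n with
  | zero => exact (hbound q hqQ z).trans (by linarith)
  | succ n =>
    calc |f q z - f (S.proj n q) z| ≤ K * dist q (S.proj n q) :=
          hlip q hqQ _ (S.mem_of_mem_points (S.proj_mem hqQ n)) z
      _ ≤ K * (1 / 2) ^ n := mul_le_mul_of_nonneg_left (S.dist_proj_le hqQ n) hK
      _ = 2 * K * (1 / 2) ^ (n + 1) := by ring

variable [MeasurableSpace Ξ] [MeasurableSpace Ω] [Fintype ι] {P : Measure Ξ} {μ : Measure Ω}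
  {X : ι → Ω → Ξ}

lemma measurable_link (S : DyadicNet Q) (hf : ∀ x ∈ Q, Measurable (f x)) (hq : q ∈ S.points n) :
    Measurable (S.link f n q) := by
  have hqQ := S.mem_of_mem_points hq
  cases n with
  | zero => exact hf q hqQ
  | succ n => exact (hf q hqQ).sub (hf _ (S.mem_of_mem_points (S.proj_mem hqQ n)))

lemma abs_empiricalError_le_sum (S : DyadicNet Q) (hint : ∀ x ∈ Q, Integrable (f x) P)
    {ξ : ι → Ξ} {t : ℕ → ℝ}
    (hlink : ∀ n, ∀ q ∈ S.points n, |empiricalError P (S.link f n q) ξ| ≤ t n)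
    (n : ℕ) {q : T} (hq : q ∈ S.points n) :
    |empiricalError P (f q) ξ| ≤ ∑ i ∈ Finset.range (n + 1), t i := by
  induction n generalizing q with
  | zero => simpa [link] using hlink 0 q hq
  | succ n ih =>
    have hqQ := S.mem_of_mem_points hq
    have hproj := S.proj_mem hqQ n
    have hincr : |empiricalError P (f q) ξ - empiricalError P (f (S.proj n q)) ξ| ≤ t (n + 1) := by
      rw [← empiricalError_sub (hint q hqQ) (hint _ (S.mem_of_mem_points hproj))]
      exact hlink (n + 1) q hq
    rw [Finset.sum_range_succ]
    linarith [ih hproj, abs_sub_abs_le_abs_sub (empiricalError P (f q) ξ)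
      (empiricalError P (f (S.proj n q)) ξ)]

lemma abs_empiricalError_le_of_link_le [Nonempty ι] [IsProbabilityMeasure P] (S : DyadicNet Q)
    (hK : 0 < K) (hint : ∀ x ∈ Q, Integrable (f x) P)
    (hlip : ∀ x ∈ Q, ∀ y ∈ Q, ∀ z, |f x z - f y z| ≤ K * dist x y) {ξ : ι → Ξ} {t : ℕ → ℝ} {τ : ℝ}
    (hlink : ∀ n, ∀ q ∈ S.points n, |empiricalError P (S.link f n q) ξ| ≤ t n)
    (hτ : ∀ n, ∑ i ∈ Finset.range n, t i ≤ τ) {x : T} (hx : x ∈ Q) :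
    |empiricalError P (f x) ξ| ≤ τ := by
  refine le_of_forall_pos_le_add fun ε hε => ?_
  obtain ⟨n, hn⟩ := exists_pow_lt_of_lt_one (show 0 < ε / (2 * K) by positivity) one_half_lt_one
  rw [lt_div_iff₀' (by positivity)] at hn
  have hp := S.mem_of_mem_points (S.proj_mem hx n)
  have hrest : |empiricalError P (f x) ξ - empiricalError P (f (S.proj n x)) ξ| ≤
      2 * (K * dist x (S.proj n x)) := by
    rw [← empiricalError_sub (hint x hx) (hint _ hp)]
    exact abs_empiricalError_le_two_mul (hlip x hx _ hp) ξ
  have hdist : K * dist x (S.proj n x) ≤ K * (1 / 2) ^ n :=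
    mul_le_mul_of_nonneg_left (S.dist_proj_le hx n) hK.le
  linarith [S.abs_empiricalError_le_sum hint hlink n (S.proj_mem hx n), hτ (n + 1),
    abs_sub_abs_le_abs_sub (empiricalError P (f x) ξ) (empiricalError P (f (S.proj n x)) ξ)]

lemma measure_exists_lt_abs_empiricalError_le [Nonempty ι] [IsProbabilityMeasure P]
    [IsProbabilityMeasure μ] (S : DyadicNet Q) (hlaw : ∀ i, HasLaw (X i) P μ)
    (hind : iIndepFun X μ) (hK : 0 < K) (hf : ∀ x ∈ Q, Measurable (f x))
    (hbound : ∀ x ∈ Q, ∀ z, |f x z| ≤ K)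
    (hlip : ∀ x ∈ Q, ∀ y ∈ Q, ∀ z, |f x z - f y z| ≤ K * dist x y) {u : ℕ → ℝ} (hu : ∀ n, 0 ≤ u n)
    {τ : ℝ}
    (hτ : ∀ n, ∑ i ∈ Finset.range n, 2 * K * (1 / 2) ^ i * √(2 * u i / Fintype.card ι) ≤ τ) :
    μ {ω | ∃ x ∈ Q, τ < |empiricalError P (f x) fun i => X i ω|} ≤
      ∑' n, (S.points n).card * ENNReal.ofReal (2 * Real.exp (-u n)) := by
  let bad (n : ℕ) (q : T) : Set Ω := {ω | 2 * K * (1 / 2) ^ n * √(2 * u n / Fintype.card ι) <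
    |empiricalError P (S.link f n q) fun i => X i ω|}
  have hsubset : {ω | ∃ x ∈ Q, τ < |empiricalError P (f x) fun i => X i ω|} ⊆
      ⋃ n, ⋃ q ∈ S.points n, bad n q := by
    rintro ω ⟨x, hx, hlt⟩
    by_contra hgood
    simp only [bad, Set.mem_iUnion, Set.mem_ofPred_eq, not_exists, not_lt] at hgood
    exact hlt.not_ge (S.abs_empiricalError_le_of_link_le hK
      (fun y hy => integrable_of_abs_le (hf y hy) (hbound y hy)) hlip hgood hτ hx)
  have hbad (n : ℕ) : μ (⋃ q ∈ S.points n, bad n q) ≤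
      (S.points n).card * ENNReal.ofReal (2 * Real.exp (-u n)) :=
    (measure_biUnion_finset_le _ _).trans <| (Finset.sum_le_card_nsmul _ _ _ fun q hq =>
      measure_lt_abs_empiricalError_le hlaw hind (S.measurable_link hf hq) (by positivity)
        (S.abs_link_le hK.le hbound hlip hq) (hu n)).trans_eq (nsmul_eq_mul _ _)
  exact (measure_mono hsubset).trans <| (measure_iUnion_le _).trans (ENNReal.tsum_le_tsum hbad)

end DyadicNet

end Chaining

section Boxes

variable {ι : Type*} {a b : ι → ℝ}

/-- The closed box `∏ [a i, b i]` in Euclidean space. -/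
def euclideanBox (a b : ι → ℝ) : Set (EuclideanSpace ℝ ι) :=
  {y | ∀ i, y i ∈ Set.Icc (a i) (b i)}

lemma euclideanBox_eq_preimage (a b : ι → ℝ) : euclideanBox a b = WithLp.ofLp ⁻¹' Set.Icc a b := by
  ext y
  simp [euclideanBox, Pi.le_def, forall_and]

lemma measurableSet_euclideanBox [Countable ι] (a b : ι → ℝ) :
    MeasurableSet (euclideanBox a b) := by
  rw [euclideanBox_eq_preimage]
  exact WithLp.measurable_ofLp 2 _ measurableSet_Icc

variable [Fintype ι]

lemma volume_euclideanBox (a b : ι → ℝ) :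
    volume (euclideanBox a b) = ∏ i, ENNReal.ofReal (b i - a i) := by
  rw [euclideanBox_eq_preimage, (PiLp.volume_preserving_ofLp ι).measure_preimage
    measurableSet_Icc.nullMeasurableSet, Real.volume_Icc_pi]

lemma dist_le_of_mem_euclideanBox {s : ℝ} (hs : 0 ≤ s) (hab : ∀ i, b i - a i ≤ s)
    {x y : EuclideanSpace ℝ ι} (hx : x ∈ euclideanBox a b) (hy : y ∈ euclideanBox a b) :
    dist x y ≤ √(Fintype.card ι) * s := by
  have hcoord (i : ι) : dist (x i) (y i) ≤ s :=
    (Real.dist_le_of_mem_Icc (hx i) (hy i)).trans (hab i)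
  calc dist x y = √(∑ i, dist (x i) (y i) ^ 2) := EuclideanSpace.dist_eq x y
    _ ≤ √(∑ _i : ι, s ^ 2) := by gcongr; exact hcoord _
    _ = √(Fintype.card ι) * s := by
        rw [Finset.sum_const, Finset.card_univ, nsmul_eq_mul, Real.sqrt_mul (by positivity),
          Real.sqrt_sq hs]

end Boxes

section Cube

variable {d m : ℕ}

lemma unitCube_eq_euclideanBox (d : ℕ) : unitCube d = euclideanBox (fun _ => 0) fun _ => 1 := rfl

lemma measurableSet_unitCube (d : ℕ) : MeasurableSet (unitCube d) :=
  measurableSet_euclideanBox _ _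

instance isProbabilityMeasure_restrict_unitCube (d : ℕ) : IsProbabilityMeasure
    ((volume : Measure (EuclideanSpace ℝ (Fin d))).restrict (unitCube d)) :=
  ⟨by simp [unitCube_eq_euclideanBox, volume_euclideanBox]⟩

/-- The closed cell with index `v` of the subdivision of the unit cube into `m ^ d` subcubes of
side `1 / m`. -/
def gridCell (m : ℕ) (v : Fin d → Fin m) : Set (EuclideanSpace ℝ (Fin d)) :=
  euclideanBox (fun i => (v i : ℝ) / m) fun i => ((v i : ℝ) + 1) / m

lemma gridCell_subset_unitCube (v : Fin d → Fin m) : gridCell m v ⊆ unitCube d := by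
  intro y hy i
  have hm : (0 : ℝ) < m := mod_cast (v i).pos
  have hv : ((v i : ℕ) : ℝ) + 1 ≤ m := mod_cast (v i).isLt
  exact ⟨(by positivity : (0 : ℝ) ≤ (v i : ℝ) / m).trans (hy i).1,
    (hy i).2.trans ((div_le_one hm).mpr hv)⟩

lemma measurableSet_gridCell (v : Fin d → Fin m) : MeasurableSet (gridCell m v) :=
  measurableSet_euclideanBox _ _

lemma measureReal_gridCell (v : Fin d → Fin m) :
    (volume.restrict (unitCube d)).real (gridCell m v) = ((m : ℝ) ^ d)⁻¹ := by
  have hside (i : Fin d) : ((v i : ℝ) + 1) / m - (v i : ℝ) / m = (m : ℝ)⁻¹ := by ring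
  rw [measureReal_restrict_apply (measurableSet_gridCell v),
    Set.inter_eq_left.mpr (gridCell_subset_unitCube v), measureReal_def, gridCell,
    volume_euclideanBox, ENNReal.toReal_prod]
  simp only [hside, ENNReal.toReal_ofReal (inv_nonneg.mpr m.cast_nonneg), Finset.prod_const,
    Finset.card_univ, Fintype.card_fin, inv_pow]

lemma exists_fin_mem_Icc_div (hm : 0 < m) {t : ℝ} (ht : t ∈ Set.Icc (0 : ℝ) 1) :
    ∃ j : Fin m, t ∈ Set.Icc ((j : ℝ) / m) (((j : ℝ) + 1) / m) := by
  have hm' : (0 : ℝ) < m := mod_cast hm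
  simp only [Set.mem_Icc, div_le_iff₀ hm', le_div_iff₀ hm']
  rcases ht.2.eq_or_lt with rfl | ht1
  · refine ⟨⟨m - 1, by omega⟩, ?_⟩
    simp [Nat.cast_sub (show 1 ≤ m from hm)]
  · have hnonneg : 0 ≤ t * m := mul_nonneg ht.1 hm'.le
    exact ⟨⟨⌊t * m⌋₊, (Nat.floor_lt hnonneg).mpr (mul_lt_of_lt_one_left hm' ht1)⟩,
      Nat.floor_le hnonneg, (Nat.lt_floor_add_one _).le⟩

lemma exists_mem_gridCell (hm : 0 < m) {x : EuclideanSpace ℝ (Fin d)} (hx : x ∈ unitCube d) :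
    ∃ v : Fin d → Fin m, x ∈ gridCell m v := by
  choose v hv using fun i => exists_fin_mem_Icc_div hm (hx i)
  exact ⟨v, hv⟩

lemma dist_le_of_mem_gridCell {v : Fin d → Fin m} {x y : EuclideanSpace ℝ (Fin d)}
    (hx : x ∈ gridCell m v) (hy : y ∈ gridCell m v) : dist x y ≤ √d / m := by
  have hside (i : Fin d) : ((v i : ℝ) + 1) / m - (v i : ℝ) / m ≤ (m : ℝ)⁻¹ := by
    rw [← sub_div, add_sub_cancel_left, one_div]
  simpa [div_eq_mul_inv] using dist_le_of_mem_euclideanBox (by positivity) hside hx hy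

lemma exists_finset_subset_unitCube_dist_le (d : ℕ) (hm : 0 < m) :
    ∃ S : Finset (EuclideanSpace ℝ (Fin d)), ↑S ⊆ unitCube d ∧ S.card ≤ m ^ d ∧
      ∀ x ∈ unitCube d, ∃ p ∈ S, dist x p ≤ √d / m := by
  classical
  let corner (v : Fin d → Fin m) : EuclideanSpace ℝ (Fin d) :=
    WithLp.toLp 2 fun i => (v i : ℝ) / m
  have hcorner (v : Fin d → Fin m) : corner v ∈ gridCell m v := fun i =>
    ⟨le_rfl, div_le_div_of_nonneg_right (lt_add_one _).le m.cast_nonneg⟩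
  refine ⟨Finset.univ.image corner, ?_, Finset.card_image_le.trans (by simp), fun x hx => ?_⟩
  · simpa [Set.range_subset_iff] using fun v => gridCell_subset_unitCube v (hcorner v)
  · obtain ⟨v, hv⟩ := exists_mem_gridCell hm hx
    exact ⟨corner v, Finset.mem_image_of_mem _ (Finset.mem_univ v),
      dist_le_of_mem_gridCell hv (hcorner v)⟩

end Cube

section Design

lemma measure_pi_forall_notMem {E ι : Type*} [MeasurableSpace E] [Fintype ι] (μ : Measure E)
    [IsProbabilityMeasure μ] {s : Set E} (hs : MeasurableSet s) :
    (Measure.pi fun _ : ι => μ) {xs | ∀ l, xs l ∉ s} =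
      ENNReal.ofReal ((1 - μ.real s) ^ Fintype.card ι) := by
  have hset : {xs : ι → E | ∀ l, xs l ∉ s} = Set.univ.pi fun _ => sᶜ := by ext; simp
  rw [hset, Measure.pi_pi, Finset.prod_const, Finset.card_univ, ← probReal_compl_eq_one_sub hs,
    ENNReal.ofReal_pow measureReal_nonneg, ofReal_measureReal]

lemma measure_pi_exists_forall_notMem_le {E ι κ : Type*} [MeasurableSpace E] [Fintype ι]
    [Fintype κ] (μ : Measure E) [IsProbabilityMeasure μ] {s : κ → Set E}
    (hs : ∀ v, MeasurableSet (s v)) {p : ℝ} (hp : ∀ v, μ.real (s v) = p) :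
    (Measure.pi fun _ : ι => μ) {xs | ∃ v, ∀ l, xs l ∉ s v} ≤
      ENNReal.ofReal (Fintype.card κ * (1 - p) ^ Fintype.card ι) := by
  rw [Set.ofPred_exists]
  refine (measure_iUnion_fintype_le _ _).trans_eq ?_
  simp only [measure_pi_forall_notMem μ (hs _), hp, Finset.sum_const, nsmul_eq_mul]
  rw [ENNReal.ofReal_mul (by positivity), ENNReal.ofReal_natCast, Finset.card_univ]

lemma ae_pi_restrict_forall_mem {E ι : Type*} [MeasurableSpace E] [Fintype ι] (μ : Measure E)
    [SigmaFinite μ] {s : Set E} (hs : MeasurableSet s) :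
    ∀ᵐ xs ∂(Measure.pi fun _ : ι => μ.restrict s), ∀ l, xs l ∈ s :=
  ae_all_iff.mpr fun l =>
    (Measure.quasiMeasurePreserving_eval (fun _ : ι => μ.restrict s) l).ae (ae_restrict_mem hs)

lemma measure_pi_not_isInternalCover_unitCube_le (d N : ℕ) {m : ℕ} (hm : 0 < m) :
    (Measure.pi fun _ : Fin N => volume.restrict (unitCube d))
      {xs | ¬ IsInternalCover (unitCube d) xs (√d / m)} ≤
        ENNReal.ofReal ((m : ℝ) ^ d * (1 - ((m : ℝ) ^ d)⁻¹) ^ N) := by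
  calc _ ≤ (Measure.pi fun _ : Fin N => volume.restrict (unitCube d))
        {xs | ∃ v : Fin d → Fin m, ∀ l, xs l ∉ gridCell m v} := by
        refine measure_mono_ae ?_
        filter_upwards [ae_pi_restrict_forall_mem volume (measurableSet_unitCube d)]
          with xs hmem hcover
        contrapose! hcover
        refine not_not.mpr ⟨hmem, fun x hx => ?_⟩
        obtain ⟨v, hv⟩ := exists_mem_gridCell hm hx
        obtain ⟨l, hl⟩ : ∃ l, xs l ∈ gridCell m v := by simpa using not_exists.mp hcover v
        exact ⟨l, dist_le_of_mem_gridCell hv hl⟩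
    _ ≤ _ := by
        simpa using measure_pi_exists_forall_notMem_le (ι := Fin N) (volume.restrict (unitCube d))
          (measurableSet_gridCell (d := d) (m := m)) measureReal_gridCell

lemma exists_nat_inv_le_two_mul {w : ℝ} (hw : 0 < w) :
    ∃ m : ℕ, 0 < m ∧ (m : ℝ)⁻¹ ≤ 2 * w ∧ (m = 1 ∨ m * w ≤ 1) := by
  have hpos : 0 < (2 * w)⁻¹ := by positivity
  refine ⟨⌈(2 * w)⁻¹⌉₊, Nat.ceil_pos.mpr hpos,
    inv_le_of_inv_le₀ (by positivity) (Nat.le_ceil _), ?_⟩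
  rcases le_or_gt (2 * w)⁻¹ 1 with hle | hgt
  · exact .inl <| (Nat.ceil_eq_iff one_ne_zero).mpr ⟨by simpa using hpos, by simpa using hle⟩
  · right
    calc (⌈(2 * w)⁻¹⌉₊ : ℝ) * w ≤ (2 * (2 * w)⁻¹) * w := by
          gcongr
          linarith [Nat.ceil_lt_add_one hpos.le]
      _ = 1 := by field_simp

lemma mul_one_sub_inv_pow_le {c δ : ℝ} {N : ℕ} (hc : 1 ≤ c) (hN : 2 ≤ N) (hδ0 : 0 < δ)
    (hδ : δ < 1 / 2) (hcN : c * (6 * (Real.log (1 / δ) * Real.log N)) ≤ N) :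
    c * (1 - c⁻¹) ^ N ≤ δ / 2 := by
  have hlog2 := Real.log_two_gt_d9
  have hlogδ : Real.log 2 ≤ Real.log (1 / δ) :=
    Real.log_le_log two_pos ((le_div_iff₀ hδ0).mpr (by linarith))
  have hlogN : Real.log 2 ≤ Real.log N := Real.log_le_log two_pos (mod_cast hN)
  have hNpos : (0 : ℝ) < N := by positivity
  have hlog_mul : Real.log (1 / δ) + Real.log N + Real.log 2 ≤
      6 * (Real.log (1 / δ) * Real.log N) := by nlinarith
  have hcN' : c ≤ N := (le_mul_of_one_le_right (by positivity) (by linarith)).trans hcN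
  have hexponent : Real.log (1 / δ) + Real.log N + Real.log 2 ≤ N * c⁻¹ := by
    rw [← div_eq_mul_inv, le_div_iff₀' (by positivity)]
    exact (mul_le_mul_of_nonneg_left hlog_mul (by positivity)).trans hcN
  calc c * (1 - c⁻¹) ^ N ≤ N * Real.exp (-c⁻¹) ^ N := by
        have hnonneg : 0 ≤ 1 - c⁻¹ := sub_nonneg.mpr (inv_le_one_of_one_le₀ hc)
        gcongr
        exact Real.one_sub_le_exp_neg _
    _ ≤ N * Real.exp (-(Real.log (1 / δ) + Real.log N + Real.log 2)) := by
        rw [← Real.exp_nat_mul, mul_neg]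
        gcongr
    _ = δ / 2 := by
        rw [Real.exp_neg, Real.exp_add, Real.exp_add, Real.exp_log (by positivity),
          Real.exp_log hNpos, Real.exp_log two_pos]
        field_simp

/-- The covering radius, up to a constant, of `N` uniform points of `[0,1]^d`: the interpolation
term of the error bound. -/
noncomputable def designRate (d N : ℕ) (δ : ℝ) : ℝ :=
  √d * (Real.log (1 / δ) * Real.log N / N) ^ (1 / (d : ℝ))

lemma designRate_nonneg (d N : ℕ) {δ : ℝ} (hδ0 : 0 < δ) (hδ1 : δ ≤ 1) : 0 ≤ designRate d N δ := by
  have := Real.log_nonneg ((one_le_div hδ0).mpr hδ1)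
  unfold designRate
  positivity

lemma measure_pi_not_isInternalCover_designRate_le {d N : ℕ} (hd : 1 ≤ d) (hN : 2 ≤ N) {δ : ℝ}
    (hδ0 : 0 < δ) (hδ : δ < 1 / 2) :
    (Measure.pi fun _ : Fin N => volume.restrict (unitCube d))
      {xs | ¬ IsInternalCover (unitCube d) xs (12 * designRate d N δ)} ≤
        ENNReal.ofReal (δ / 2) := by
  set u := Real.log (1 / δ) * Real.log N / N with hu_def
  set w := u ^ (1 / (d : ℝ)) with hw_def
  have hu : 0 < u := by
    have := Real.log_pos ((one_lt_div hδ0).mpr (hδ.trans one_half_lt_one))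
    have := Real.log_pos (Nat.one_lt_cast (α := ℝ) |>.mpr hN)
    positivity
  have hwd : w ^ d = u := by
    rw [hw_def, one_div, Real.rpow_inv_natCast_pow hu.le (by omega)]
  obtain ⟨m, hm, hmw, hcoarse⟩ := exists_nat_inv_le_two_mul (show 0 < 6 * w by positivity)
  have hradius : √d / m ≤ 12 * designRate d N δ := by
    rw [div_eq_mul_inv]
    calc √d * (m : ℝ)⁻¹ ≤ √d * (2 * (6 * w)) := by gcongr
      _ = 12 * designRate d N δ := by rw [designRate]; ring
  have hm1 : (1 : ℝ) ≤ (m : ℝ) ^ d := one_le_pow₀ (mod_cast hm)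
  have hprob : (m : ℝ) ^ d * (1 - ((m : ℝ) ^ d)⁻¹) ^ N ≤ δ / 2 := by
    rcases hcoarse with rfl | hfine
    · simpa [show N ≠ 0 by omega] using (half_pos hδ0).le
    · refine mul_one_sub_inv_pow_le hm1 hN hδ0 hδ ?_
      have hpow : (m : ℝ) ^ d * (6 * u) ≤ 1 :=
        calc (m : ℝ) ^ d * (6 * u) ≤ (m : ℝ) ^ d * (6 ^ d * w ^ d) := by
              rw [hwd]
              gcongr
              exact le_self_pow₀ (by norm_num) (by omega)
          _ = (m * (6 * w)) ^ d := by ring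
          _ ≤ 1 := pow_le_one₀ (by positivity) hfine
      rwa [hu_def, ← mul_div_assoc, ← mul_div_assoc, div_le_one (by positivity)] at hpow
  exact (measure_mono fun _ => mt fun hfine : IsInternalCover _ _ _ => hfine.mono hradius).trans <|
    (measure_pi_not_isInternalCover_unitCube_le d N hm).trans (ENNReal.ofReal_le_ofReal hprob)

end Design

section UniformDeviation

open ProbabilityTheory

lemma exists_dyadicNet_unitCube {d : ℕ} (hd : 1 ≤ d) :
    ∃ S : DyadicNet (unitCube d), ∀ n, (S.points n).card ≤ (d * 2 ^ n) ^ d := by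
  have hnet (n : ℕ) := exists_finset_subset_unitCube_dist_le d (m := d * 2 ^ n) (by positivity)
  choose points hsubset hcard hcover using hnet
  have hproj (n : ℕ) (x : EuclideanSpace ℝ (Fin d)) :
      ∃ p, x ∈ unitCube d → p ∈ points n ∧ dist x p ≤ √d / (d * 2 ^ n : ℕ) := by
    by_cases hx : x ∈ unitCube d
    · exact (hcover n x hx).imp fun p hp _ => hp
    · exact ⟨x, fun h => absurd h hx⟩
  choose proj hproj using hproj
  have hmesh (n : ℕ) : √(d : ℝ) / (d * 2 ^ n : ℕ) ≤ (1 / 2) ^ n := by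
    have hsqrt : √(d : ℝ) ≤ d := Real.sqrt_le_self_iff.mpr (.inr (mod_cast hd))
    rw [Nat.cast_mul, ← div_div, one_div_pow, Nat.cast_pow, Nat.cast_ofNat]
    gcongr
    exact div_le_one_of_le₀ hsqrt d.cast_nonneg
  exact ⟨⟨points, proj, fun {n} _ hq => hsubset n hq, fun hx n => (hproj n _ hx).1,
    fun hx n => (hproj n _ hx).2.trans (hmesh n)⟩, hcard⟩

lemma sqrt_mul_natCast_add_one_le (a : ℝ) (n : ℕ) : √(a * (n + 1)) ≤ √a * (n + 1) := by
  rw [Real.sqrt_mul' a (by positivity)]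
  exact mul_le_mul_of_nonneg_left (Real.sqrt_le_self_iff.mpr (.inr (by simp))) (Real.sqrt_nonneg a)

lemma sum_range_mul_half_pow_mul_sqrt_le {b : ℝ} (hb : 0 ≤ b) (a : ℝ) (n : ℕ) :
    ∑ i ∈ Finset.range n, b * (1 / 2) ^ i * √(a * (i + 1)) ≤ 4 * b * √a := by
  have hterm (i : ℕ) : b * (1 / 2) ^ i * √(a * (i + 1)) ≤ b * √a * ((i + 1) * (1 / 2) ^ i) := by
    have := mul_le_mul_of_nonneg_left (sqrt_mul_natCast_add_one_le a i)
      (show 0 ≤ b * (1 / 2) ^ i by positivity)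
    linarith
  have hsum := mul_le_mul_of_nonneg_left
    (sum_range_add_one_mul_geometric_le (γ := 1 / 2) (by norm_num) (by norm_num) n)
    (show 0 ≤ b * √a by positivity)
  calc _ ≤ ∑ i ∈ Finset.range n, b * √a * ((i + 1) * (1 / 2) ^ i) :=
        Finset.sum_le_sum fun i _ => hterm i
    _ ≤ 4 * b * √a := by
        rw [← Finset.mul_sum]
        norm_num at hsum ⊢
        linarith

variable {d : ℕ} {δ : ℝ}

/-- The accuracy of the mean of `M` samples, uniformly over a Lipschitz family indexed by
`[0,1]^d`, at confidence level `1 - δ`. -/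
noncomputable def monteCarloRate (d : ℕ) (δ : ℝ) (M : ℕ) : ℝ :=
  √(d * Real.log (d / δ) / M)

lemma sum_range_link_threshold_le {K : ℝ} (hK : 0 ≤ K) (d : ℕ) (δ : ℝ) {M : ℕ} (j n : ℕ) :
    ∑ i ∈ Finset.range n, 2 * K * (1 / 2) ^ i *
        √(2 * (d * Real.log (d / δ) * (8 * (j + 1) * (i + 1) : ℕ)) / M) ≤
      32 * K * monteCarloRate d δ M * (j + 1) := by
  set a := d * Real.log (d / δ) / M with ha
  have hlevel (i : ℕ) : 2 * (d * Real.log (d / δ) * (8 * (j + 1) * (i + 1) : ℕ)) / M =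
      4 ^ 2 * (a * (j + 1)) * (i + 1) := by
    rw [ha]
    push_cast
    ring
  simp only [hlevel]
  calc _ ≤ 4 * (2 * K) * √(4 ^ 2 * (a * (j + 1))) :=
        sum_range_mul_half_pow_mul_sqrt_le (by positivity) _ n
    _ = 32 * K * √(a * (j + 1)) := by
        rw [Real.sqrt_mul (by positivity), Real.sqrt_sq (by norm_num)]
        ring
    _ ≤ 32 * K * (√a * (j + 1)) :=
        mul_le_mul_of_nonneg_left (sqrt_mul_natCast_add_one_le a j) (by positivity)
    _ = 32 * K * monteCarloRate d δ M * (j + 1) := by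
        rw [monteCarloRate, ← ha]
        ring

lemma exp_neg_mul_log_div (hd : 1 ≤ d) (hδ : 0 < δ) (n : ℕ) :
    Real.exp (-(d * Real.log (d / δ) * n)) = (δ / d) ^ (d * n) := by
  have hratio : 0 < δ / d := div_pos hδ (mod_cast hd)
  rw [← inv_div, Real.log_inv, show -((d : ℝ) * -Real.log (δ / d) * n) =
    ((d * n : ℕ) : ℝ) * Real.log (δ / d) by push_cast; ring, Real.exp_nat_mul,
    Real.exp_log hratio]

lemma card_mul_exp_le (hd : 1 ≤ d) (hδ0 : 0 < δ) (hδ : δ ≤ 1 / 2) (j n : ℕ) :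
    ((d : ℝ) * 2 ^ n) ^ d *
        (2 * Real.exp (-(d * Real.log (d / δ) * (8 * (j + 1) * (n + 1) : ℕ)))) ≤
      δ / 2 * (1 / 2) ^ (j + 1) / 2 / 2 ^ n := by
  have hd1 : (1 : ℝ) ≤ d := mod_cast hd
  set q := δ / d with hq
  have hq0 : 0 < q := by positivity
  have hq2 : q ≤ 1 / 2 := (div_le_self hδ0.le hd1).trans hδ
  have hdq : (d * q) ^ d ≤ δ := by
    rw [hq, mul_div_cancel₀ _ (by positivity)]
    exact pow_le_of_le_one hδ0.le (by linarith) (by omega)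
  have hscale : (2 * q) ^ (d * n) ≤ 1 := pow_le_one₀ (by positivity) (by linarith)
  have hspare : q ^ (d * (n + j + 4)) ≤ (1 / 2) ^ (n + j + 4) :=
    (pow_le_pow_of_le_one hq0.le (by linarith) (Nat.le_mul_of_pos_left _ hd)).trans
      (pow_le_pow_left₀ hq0.le hq2 _)
  have hexponent : d + d * n + d * (n + j + 4) ≤ d * (8 * (j + 1) * (n + 1)) := by
    rw [show d + d * n + d * (n + j + 4) = d * (2 * n + j + 5) by ring]
    exact Nat.mul_le_mul_left d (by nlinarith)
  rw [exp_neg_mul_log_div hd hδ0]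
  calc ((d : ℝ) * 2 ^ n) ^ d * (2 * q ^ (d * (8 * (j + 1) * (n + 1))))
      ≤ (d * 2 ^ n) ^ d * (2 * q ^ (d + d * n + d * (n + j + 4))) := by
        have hpow := pow_le_pow_of_le_one hq0.le (by linarith) hexponent
        gcongr ?_ * (2 * ?_)
    _ = 2 * (((d * q) ^ d * (2 * q) ^ (d * n)) * q ^ (d * (n + j + 4))) := by ring
    _ ≤ 2 * ((δ * 1) * (1 / 2) ^ (n + j + 4)) := by gcongr
    _ = δ / 2 * (1 / 2) ^ (j + 1) / 2 / 2 ^ n := by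
        simp only [one_div, inv_pow, pow_add]
        field_simp

variable {Ξ ι Ω : Type*} [MeasurableSpace Ξ] [MeasurableSpace Ω] [Fintype ι] [Nonempty ι]
  {P : Measure Ξ} {μ : Measure Ω} [IsProbabilityMeasure P] [IsProbabilityMeasure μ]
  {X : ι → Ω → Ξ} {K : ℝ}

lemma measure_exists_mem_unitCube_lt_abs_empiricalError_le (hd : 1 ≤ d) (hδ0 : 0 < δ)
    (hδ : δ ≤ 1 / 2) (hlaw : ∀ i, HasLaw (X i) P μ) (hind : iIndepFun X μ)
    {f : EuclideanSpace ℝ (Fin d) → Ξ → ℝ} (hK : 0 < K) (hf : ∀ x ∈ unitCube d, Measurable (f x))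
    (hbound : ∀ x ∈ unitCube d, ∀ z, |f x z| ≤ K)
    (hlip : ∀ x ∈ unitCube d, ∀ y ∈ unitCube d, ∀ z, |f x z - f y z| ≤ K * dist x y) (j : ℕ) :
    μ {ω | ∃ x ∈ unitCube d, 32 * K * monteCarloRate d δ (Fintype.card ι) * (j + 1) <
        |empiricalError P (f x) fun i => X i ω|} ≤
      ENNReal.ofReal (δ / 2 * (1 / 2) ^ (j + 1)) := by
  obtain ⟨S, hcard⟩ := exists_dyadicNet_unitCube hd
  have hlog : 0 ≤ Real.log (d / δ) := Real.log_nonneg <| by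
    rw [le_div_iff₀ hδ0]
    linarith [show (1 : ℝ) ≤ d from mod_cast hd]
  let u (n : ℕ) : ℝ := d * Real.log (d / δ) * (8 * (j + 1) * (n + 1) : ℕ)
  have hlevel (n : ℕ) : (S.points n).card * ENNReal.ofReal (2 * Real.exp (-u n)) ≤
      ENNReal.ofReal (δ / 2 * (1 / 2) ^ (j + 1) / 2 / 2 ^ n) := by
    rw [← ENNReal.ofReal_natCast, ← ENNReal.ofReal_mul (by positivity)]
    refine ENNReal.ofReal_le_ofReal (le_trans ?_ (card_mul_exp_le hd hδ0 hδ j n))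
    gcongr
    exact_mod_cast hcard n
  calc _ ≤ ∑' n, (S.points n).card * ENNReal.ofReal (2 * Real.exp (-u n)) :=
        S.measure_exists_lt_abs_empiricalError_le hlaw hind hK hf hbound hlip
          (fun n => by positivity) (sum_range_link_threshold_le hK.le d δ j)
    _ ≤ ∑' n, ENNReal.ofReal (δ / 2 * (1 / 2) ^ (j + 1) / 2 / 2 ^ n) :=
        ENNReal.tsum_le_tsum hlevel
    _ = ENNReal.ofReal (δ / 2 * (1 / 2) ^ (j + 1)) := by
        rw [← ENNReal.ofReal_tsum_of_nonneg (fun n => by positivity) (summable_geometric_two' _),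
          tsum_geometric_two']

lemma measure_exists_action_lt_abs_empiricalError_le {A : Type*} [Fintype A] [Nonempty A]
    (hd : 1 ≤ d) (hδ0 : 0 < δ) (hδ : δ ≤ 1 / 2) (hlaw : ∀ i, HasLaw (X i) P μ)
    (hind : iIndepFun X μ) {f : A → EuclideanSpace ℝ (Fin d) → Ξ → ℝ} (hK : 0 < K)
    (hf : ∀ a, ∀ x ∈ unitCube d, Measurable (f a x))
    (hbound : ∀ a, ∀ x ∈ unitCube d, ∀ z, |f a x z| ≤ K)
    (hlip : ∀ a, ∀ x ∈ unitCube d, ∀ y ∈ unitCube d, ∀ z, |f a x z - f a y z| ≤ K * dist x y)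
    (j : ℕ) :
    μ {ω | ∃ a, ∃ x ∈ unitCube d,
        32 * K * monteCarloRate d (δ / Fintype.card A) (Fintype.card ι) * (j + 1) <
          |empiricalError P (f a x) fun i => X i ω|} ≤
      ENNReal.ofReal (δ / 2 * (1 / 2) ^ (j + 1)) := by
  have hcard : (1 : ℝ) ≤ Fintype.card A := mod_cast Fintype.card_pos
  have hδA : δ / Fintype.card A ≤ 1 / 2 := (div_le_self hδ0.le hcard).trans hδ
  rw [Set.ofPred_exists]
  calc _ ≤ ∑ _a : A, ENNReal.ofReal (δ / Fintype.card A / 2 * (1 / 2) ^ (j + 1)) :=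
        (measure_iUnion_fintype_le _ _).trans <| Finset.sum_le_sum fun a _ =>
          measure_exists_mem_unitCube_lt_abs_empiricalError_le hd (by positivity) hδA hlaw hind hK
            (hf a) (hbound a) (hlip a) j
    _ = ENNReal.ofReal (δ / 2 * (1 / 2) ^ (j + 1)) := by
        rw [Finset.sum_const, Finset.card_univ, nsmul_eq_mul, ← ENNReal.ofReal_natCast,
          ← ENNReal.ofReal_mul (by positivity)]
        congr 1
        field_simp

end UniformDeviation

section Iteration

lemma tildeStep_eq_expect {X A Ξ : Type*} (ψ : X → A → Ξ → X) (r : A → X → ℝ) (γ : ℝ)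
    (Vpi : X → ℝ) (M1 M2 : ℕ) (V : X → ℝ) (ξs : ℕ → Ξ) (x : X) :
    tildeStep ψ r γ Vpi M1 M2 V ξs x =
      𝔼 j ∈ Finset.Ico M1 (M1 + M2), ⨆ a, (r a x + γ * (V (ψ x a (ξs j)) - Vpi (ψ x a (ξs j)) +
        𝔼 l : Fin M1, Vpi (ψ x a (ξs l)))) := by
  have hinner (a : A) : (M1 : ℝ)⁻¹ * ∑ l ∈ Finset.range M1, Vpi (ψ x a (ξs l)) =
      𝔼 l : Fin M1, Vpi (ψ x a (ξs l)) := by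
    rw [Fintype.expect_eq_sum_div_card, Fintype.card_fin, div_eq_inv_mul,
      Fin.sum_univ_eq_sum_range fun l => Vpi (ψ x a (ξs l))]
  simp only [tildeStep, hinner, Finset.expect_eq_sum_div_card, Nat.card_Ico, add_tsub_cancel_left,
    div_eq_inv_mul]

/-- The regularity of a controlled system on an invariant set `Q`: for each fixed action, the
reward, the dynamics and the control variate `Vpi` along the dynamics are Lipschitz in the state. -/
structure IsLipschitzModel {X A Ξ : Type*} [PseudoMetricSpace X] (Q : Set X) (ψ : X → A → Ξ → X)
    (r : A → X → ℝ) (Vpi : X → ℝ) (Lmax Lpsi Lpi : ℝ) : Prop where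
  next_mem : ∀ x ∈ Q, ∀ a ξ, ψ x a ξ ∈ Q
  abs_reward_sub_le : ∀ a, ∀ x ∈ Q, ∀ y ∈ Q, |r a x - r a y| ≤ Lmax * dist x y
  dist_next_le : ∀ a ξ, ∀ x ∈ Q, ∀ y ∈ Q, dist (ψ x a ξ) (ψ y a ξ) ≤ Lpsi * dist x y
  abs_control_sub_le : ∀ a ξ, ∀ x ∈ Q, ∀ y ∈ Q,
    |Vpi (ψ x a ξ) - Vpi (ψ y a ξ)| ≤ Lpi * dist x y

/-- `Vstar` solves the Bellman optimality equation on `Q`; integrability along the dynamics is part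
of the notion, because the Bochner integral of a non-integrable function is `0`. -/
structure IsBellmanFixedPoint {X A Ξ : Type*} [MeasurableSpace Ξ] (P : Measure Ξ) (Q : Set X)
    (ψ : X → A → Ξ → X) (r : A → X → ℝ) (γ : ℝ) (Vstar : X → ℝ) : Prop where
  integrable_next : ∀ x ∈ Q, ∀ a, Integrable (fun ξ => Vstar (ψ x a ξ)) P
  eq_iSup : ∀ x ∈ Q, Vstar x = ⨆ a, (r a x + γ * ∫ ξ, Vstar (ψ x a ξ) ∂P)

variable {X A Ξ : Type*} {Q : Set X} {ψ : X → A → Ξ → X} {r : A → X → ℝ}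
  {γ : ℝ} {Vpi Vstar V V0 : X → ℝ} {Lmax Lpsi Lpi L LV D E G ρ : ℝ} {M1 M2 : ℕ}

lemma abs_uvipIter_sub_uvipIter_le [MetricSpace X] {N k : ℕ} [NeZero N] {xs : Fin N → X}
    {ω : ℕ → ℕ → Ξ} (hLV0 : 0 ≤ LV)
    (hV0 : ∀ x ∈ Q, ∀ y ∈ Q, |V0 x - V0 y| ≤ LV * dist x y) :
    ∀ x ∈ Q, ∀ y ∈ Q, |uvipIter ψ r γ Vpi M1 M2 LV xs V0 k ω x -
      uvipIter ψ r γ Vpi M1 M2 LV xs V0 k ω y| ≤ LV * dist x y := by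
  cases k with
  | zero => exact hV0
  | succ k => exact fun x _ y _ => abs_centralInterp_sub_centralInterp_le xs hLV0 _ x y

variable [Finite A] [Nonempty A]

lemma abs_tildeStep_sub_tildeStep_le [PseudoMetricSpace X]
    (hmodel : IsLipschitzModel Q ψ r Vpi Lmax Lpsi Lpi) (hγ : 0 ≤ γ) (hL : 0 ≤ L)
    (hV : ∀ x ∈ Q, ∀ y ∈ Q, |V x - V y| ≤ L * dist x y) (hM1 : 1 ≤ M1) (hM2 : 1 ≤ M2)
    (ξs : ℕ → Ξ) {x y : X} (hx : x ∈ Q) (hy : y ∈ Q) :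
    |tildeStep ψ r γ Vpi M1 M2 V ξs x - tildeStep ψ r γ Vpi M1 M2 V ξs y| ≤
      (Lmax + 2 * γ * Lpi + γ * Lpsi * L) * dist x y := by
  have : NeZero M1 := ⟨by omega⟩
  simp only [tildeStep_eq_expect]
  refine abs_expect_sub_expect_le (Finset.nonempty_Ico.mpr (by omega)) fun j _ =>
    abs_ciSup_sub_ciSup_le fun a => ?_
  have hreward := hmodel.abs_reward_sub_le a x hx y hy
  have hvalue : |V (ψ x a (ξs j)) - V (ψ y a (ξs j))| ≤ L * (Lpsi * dist x y) :=
    (hV _ (hmodel.next_mem x hx a _) _ (hmodel.next_mem y hy a _)).trans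
      (mul_le_mul_of_nonneg_left (hmodel.dist_next_le a _ x hx y hy) hL)
  have hcontrol := hmodel.abs_control_sub_le a (ξs j) x hx y hy
  have hmean : |𝔼 l : Fin M1, Vpi (ψ x a (ξs l)) - 𝔼 l : Fin M1, Vpi (ψ y a (ξs l))| ≤
      Lpi * dist x y :=
    abs_expect_sub_expect_le Finset.univ_nonempty fun l _ =>
      hmodel.abs_control_sub_le a (ξs l) x hx y hy
  rw [abs_le] at *
  constructor <;> nlinarith

lemma abs_tildeStep_sub_le [MeasurableSpace Ξ] {P : Measure Ξ} [IsProbabilityMeasure P]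
    (hfix : IsBellmanFixedPoint P Q ψ r γ Vstar) (hγ : 0 ≤ γ)
    (hmem : ∀ x ∈ Q, ∀ a ξ, ψ x a ξ ∈ Q)
    (hint : ∀ x ∈ Q, ∀ a, Integrable (fun ξ => Vpi (ψ x a ξ)) P)
    (hE : ∀ x ∈ Q, |V x - Vstar x| ≤ E) (hD : ∀ x ∈ Q, |Vpi x - Vstar x| ≤ D) (hM2 : 1 ≤ M2)
    {ξs : ℕ → Ξ}
    (hG : ∀ x ∈ Q, ∀ a,
      |empiricalError P (fun ξ => Vpi (ψ x a ξ)) fun l : Fin M1 => ξs l| ≤ G)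
    {x : X} (hx : x ∈ Q) :
    |tildeStep ψ r γ Vpi M1 M2 V ξs x - Vstar x| ≤ γ * (E + 2 * D + G) := by
  have hnodes : (Finset.Ico M1 (M1 + M2)).Nonempty := Finset.nonempty_Ico.mpr (by omega)
  rw [tildeStep_eq_expect, ← Finset.expect_const hnodes (Vstar x)]
  refine abs_expect_sub_expect_le hnodes fun j _ => ?_
  rw [hfix.eq_iSup x hx]
  refine abs_ciSup_sub_ciSup_le fun a => ?_
  have hvalue := hE _ (hmem x hx a (ξs j))
  have hcontrol := hD _ (hmem x hx a (ξs j))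
  have hsample := hG x hx a
  have hmean : |∫ ξ, Vpi (ψ x a ξ) ∂P - ∫ ξ, Vstar (ψ x a ξ) ∂P| ≤ D := by
    rw [← integral_sub (hint x hx a) (hfix.integrable_next x hx a)]
    simpa using norm_integral_le_of_norm_le_const (μ := P)
      (f := fun ξ => Vpi (ψ x a ξ) - Vstar (ψ x a ξ)) (C := D) <|
      Filter.Eventually.of_forall fun ξ => hD _ (hmem x hx a ξ)
  rw [add_sub_add_left_eq_sub, ← mul_sub, abs_mul, abs_of_nonneg hγ]
  refine mul_le_mul_of_nonneg_left ?_ hγ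
  rw [empiricalError] at hsample
  rw [abs_le] at *
  constructor <;> linarith

variable [MetricSpace X] [MeasurableSpace Ξ] {P : Measure Ξ} [IsProbabilityMeasure P]
  {N : ℕ} [NeZero N] {xs : Fin N → X} {ω : ℕ → ℕ → Ξ}

lemma abs_uvipIter_succ_sub_le (hmodel : IsLipschitzModel Q ψ r Vpi Lmax Lpsi Lpi)
    (hfix : IsBellmanFixedPoint P Q ψ r γ Vstar) (hγ : 0 ≤ γ)
    (hint : ∀ x ∈ Q, ∀ a, Integrable (fun ξ => Vpi (ψ x a ξ)) P)
    (hLV0 : 0 ≤ LV) (hLV : Lmax + 2 * γ * Lpi + γ * Lpsi * LV ≤ LV)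
    (hV0 : ∀ x ∈ Q, ∀ y ∈ Q, |V0 x - V0 y| ≤ LV * dist x y)
    (hD : ∀ x ∈ Q, |Vpi x - Vstar x| ≤ D) (hxs : IsInternalCover Q xs ρ)
    (hM1 : 1 ≤ M1) (hM2 : 1 ≤ M2) {k : ℕ}
    (hE : ∀ x ∈ Q, |uvipIter ψ r γ Vpi M1 M2 LV xs V0 k ω x - Vstar x| ≤ E)
    (hG : ∀ x ∈ Q, ∀ a,
      |empiricalError P (fun ξ => Vpi (ψ x a ξ)) fun l : Fin M1 => ω k l| ≤ G) :
    ∀ x ∈ Q, |uvipIter ψ r γ Vpi M1 M2 LV xs V0 (k + 1) ω x - Vstar x| ≤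
      γ * E + (2 * γ * D + LV * ρ + γ * G) := by
  intro x hx
  have hstep : ∀ y ∈ Q, ∀ z ∈ Q,
      |tildeStep ψ r γ Vpi M1 M2 (uvipIter ψ r γ Vpi M1 M2 LV xs V0 k ω) (ω k) y -
        tildeStep ψ r γ Vpi M1 M2 (uvipIter ψ r γ Vpi M1 M2 LV xs V0 k ω) (ω k) z| ≤
      LV * dist y z := fun y hy z hz =>
    (abs_tildeStep_sub_tildeStep_le hmodel hγ hLV0 (abs_uvipIter_sub_uvipIter_le hLV0 hV0)
      hM1 hM2 (ω k) hy hz).trans (mul_le_mul_of_nonneg_right hLV dist_nonneg)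
  calc |uvipIter ψ r γ Vpi M1 M2 LV xs V0 (k + 1) ω x - Vstar x|
      ≤ LV * ρ + γ * (E + 2 * D + G) :=
        (abs_sub_le _ _ _).trans (add_le_add (abs_centralInterp_sub_le hxs hLV0 hstep hx)
          (abs_tildeStep_sub_le hfix hγ hmodel.next_mem hint hE hD hM2 hG hx))
    _ = γ * E + (2 * γ * D + LV * ρ + γ * G) := by ring

lemma abs_uvipIter_sub_le (hmodel : IsLipschitzModel Q ψ r Vpi Lmax Lpsi Lpi)
    (hfix : IsBellmanFixedPoint P Q ψ r γ Vstar) (hγ0 : 0 ≤ γ) (hγ1 : γ < 1)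
    (hint : ∀ x ∈ Q, ∀ a, Integrable (fun ξ => Vpi (ψ x a ξ)) P)
    (hLV0 : 0 ≤ LV) (hLV : Lmax + 2 * γ * Lpi + γ * Lpsi * LV ≤ LV)
    (hV0 : ∀ x ∈ Q, ∀ y ∈ Q, |V0 x - V0 y| ≤ LV * dist x y)
    (hE : ∀ x ∈ Q, |V0 x - Vstar x| ≤ E) (hD0 : 0 ≤ D) (hD : ∀ x ∈ Q, |Vpi x - Vstar x| ≤ D)
    (hρ : 0 ≤ ρ) (hxs : IsInternalCover Q xs ρ) (hM1 : 1 ≤ M1) (hM2 : 1 ≤ M2) (hG0 : 0 ≤ G) {k : ℕ}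
    (hG : ∀ i < k, ∀ x ∈ Q, ∀ a,
      |empiricalError P (fun ξ => Vpi (ψ x a ξ)) fun l : Fin M1 => ω i l| ≤
        G * (((k - 1 - i : ℕ) : ℝ) + 1)) :
    ∀ x ∈ Q, |uvipIter ψ r γ Vpi M1 M2 LV xs V0 k ω x - Vstar x| ≤
      γ ^ k * E + ((2 * D + LV * ρ) * (1 - γ)⁻¹ + G * (1 - γ)⁻¹ ^ 2) := by
  have hiter := forall_le_pow_mul_add_sum (Q := Q) (γ := γ) (k := k)
    (F := fun i x => |uvipIter ψ r γ Vpi M1 M2 LV xs V0 i ω x - Vstar x|)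
    (b := fun i => 2 * D + LV * ρ + G * (((k - 1 - i : ℕ) : ℝ) + 1)) hE
    fun i hi B hB x hx =>
      (abs_uvipIter_succ_sub_le hmodel hfix hγ0 hint hLV0 hLV hV0 hD hxs hM1 hM2 hB (hG i hi) x
        hx).trans <| by
          have hDγ : γ * D ≤ D := mul_le_of_le_one_left hD0 hγ1.le
          have hGγ := mul_le_of_le_one_left
            (show 0 ≤ G * (((k - 1 - i : ℕ) : ℝ) + 1) by positivity) hγ1.le
          linarith
  exact fun x hx => (hiter x hx).trans <| add_le_add_right
    (sum_geometric_mul_add_le hγ0 hγ1 (by positivity) hG0 k) _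

end Iteration

section FailureProbabilities

variable {α β : Type*} [MeasurableSpace α] [MeasurableSpace β]

lemma ofReal_one_sub_le_measure {μ : Measure α} [IsProbabilityMeasure μ] {s : Set α} {δ : ℝ}
    (hδ : 0 ≤ δ) (hs : μ sᶜ ≤ ENNReal.ofReal δ) : ENNReal.ofReal (1 - δ) ≤ μ s := by
  rw [ENNReal.ofReal_sub _ hδ, ENNReal.ofReal_one, tsub_le_iff_right]
  calc (1 : ENNReal) = μ (s ∪ sᶜ) := by rw [Set.union_compl_self, measure_univ]
    _ ≤ μ s + ENNReal.ofReal δ := (measure_union_le _ _).trans (by gcongr)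

lemma sum_fin_reflect_geometric_two_le {ε : ℝ} (hε : 0 ≤ ε) (k : ℕ) :
    ∑ i : Fin k, ε * (1 / 2) ^ (k - 1 - i + 1) ≤ ε := by
  rw [Fin.sum_univ_eq_sum_range (fun i => ε * (1 / 2 : ℝ) ^ (k - 1 - i + 1)) k,
    Finset.sum_range_reflect (fun i => ε * (1 / 2 : ℝ) ^ (i + 1)) k]
  refine (Finset.sum_congr rfl fun i _ => ?_).trans_le
    (sum_le_hasSum _ (fun i _ => by positivity) (hasSum_geometric_two' ε))
  rw [one_div, inv_pow, pow_succ]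
  field_simp

lemma measure_prod_pi_union_iUnion_le {μ : Measure α} {ν : Measure β} [IsProbabilityMeasure μ]
    [IsProbabilityMeasure ν] {s : Set α} {t : ℕ → Set β} {ε : ℝ} (hε : 0 ≤ ε)
    (hs : μ s ≤ ENNReal.ofReal ε) (ht : ∀ j, ν (t j) ≤ ENNReal.ofReal (ε * (1 / 2) ^ (j + 1)))
    (k : ℕ) :
    μ.prod (Measure.pi fun _ : Fin k => ν)
        (Prod.fst ⁻¹' s ∪ ⋃ i : Fin k, (fun ω => ω.2 i) ⁻¹' t (k - 1 - i)) ≤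
      ENNReal.ofReal (ε + ε) := by
  rw [ENNReal.ofReal_add hε hε]
  refine (measure_union_le _ _).trans (add_le_add
    ((measurePreserving_fst.measure_preimage_le s).trans hs) ?_)
  have hcoord (i : Fin k) : μ.prod (Measure.pi fun _ : Fin k => ν)
      ((fun ω => ω.2 i) ⁻¹' t (k - 1 - i)) ≤ ENNReal.ofReal (ε * (1 / 2) ^ (k - 1 - i + 1)) :=
    (((measurePreserving_eval (fun _ => ν) i).comp measurePreserving_snd).measure_preimage_le
      _).trans (ht _)
  calc _ ≤ ∑ i : Fin k, ENNReal.ofReal (ε * (1 / 2) ^ (k - 1 - i + 1)) :=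
        (measure_iUnion_fintype_le _ _).trans (Finset.sum_le_sum fun i _ => hcoord i)
    _ = ENNReal.ofReal (∑ i : Fin k, ε * (1 / 2) ^ (k - 1 - i + 1)) :=
        (ENNReal.ofReal_sum_of_nonneg fun i _ => by positivity).symm
    _ ≤ ENNReal.ofReal ε := ENNReal.ofReal_le_ofReal (sum_fin_reflect_geometric_two_le hε k)

end FailureProbabilities

section Assembly

/-- The constant of the error bound for slope `LV` and a control variate bounded by `K` and
`K`-Lipschitz along the dynamics. Its summands are the coefficients of the four error terms: initial
error, control-variate gap, design and Monte Carlo. -/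
noncomputable def uvipConstant (γ LV K : ℝ) : ℝ :=
  1 + 2 * (1 - γ)⁻¹ + 12 * LV * (1 - γ)⁻¹ + 32 * K * (1 - γ)⁻¹ ^ 2

lemma uvipConstant_pos {γ LV K : ℝ} (hγ : γ < 1) (hLV : 0 ≤ LV) (hK : 0 ≤ K) :
    0 < uvipConstant γ LV K := by
  have : 0 < 1 - γ := sub_pos.mpr hγ
  unfold uvipConstant
  positivity

lemma error_terms_le_uvipConstant_mul {γ LV K e D T z : ℝ} (hγ : γ < 1) (hLV : 0 ≤ LV)
    (hK : 0 ≤ K) (he : 0 ≤ e) (hD : 0 ≤ D) (hT : 0 ≤ T) (hz : 0 ≤ z) :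
    e + ((2 * D + LV * (12 * z)) * (1 - γ)⁻¹ + 32 * K * T * (1 - γ)⁻¹ ^ 2) ≤
      uvipConstant γ LV K * (e + D + T + z) := by
  have hα : 0 < (1 - γ)⁻¹ := inv_pos.mpr (sub_pos.mpr hγ)
  have hle {c x : ℝ} (hx : 0 ≤ x) (hc : c ≤ uvipConstant γ LV K) :
      c * x ≤ uvipConstant γ LV K * x := mul_le_mul_of_nonneg_right hc hx
  have hc1 : 0 ≤ 12 * LV * (1 - γ)⁻¹ := by positivity
  have hc2 : 0 ≤ 32 * K * (1 - γ)⁻¹ ^ 2 := by positivity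
  calc _ = 1 * e + 2 * (1 - γ)⁻¹ * D + 32 * K * (1 - γ)⁻¹ ^ 2 * T +
        12 * LV * (1 - γ)⁻¹ * z := by ring
    _ ≤ uvipConstant γ LV K * e + uvipConstant γ LV K * D + uvipConstant γ LV K * T +
        uvipConstant γ LV K * z := by
        gcongr ?_ + ?_ + ?_ + ?_ <;> refine hle ‹_› ?_ <;> unfold uvipConstant <;> linarith
    _ = uvipConstant γ LV K * (e + D + T + z) := by ring

lemma extendSamples_castAdd {Ξ : Type*} [Nonempty Ξ] {k M1 M2 : ℕ}
    (ω : Fin k → Fin (M1 + M2) → Ξ) (i : Fin k) (l : Fin M1) :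
    extendSamples k (M1 + M2) ω i l = ω i (Fin.castAdd M2 l) :=
  dif_pos ⟨i.isLt, (Fin.castAdd M2 l).isLt⟩

lemma bddAbove_range_abs_sub {d : ℕ} {V W : EuclideanSpace ℝ (Fin d) → ℝ} {L B : ℝ} (hL : 0 ≤ L)
    (hV : ∀ x ∈ unitCube d, ∀ y ∈ unitCube d, |V x - V y| ≤ L * dist x y)
    (hW : ∀ x ∈ unitCube d, |W x| ≤ B) :
    BddAbove (Set.range fun x : unitCube d => |V x - W x|) := by
  have hzero : (0 : EuclideanSpace ℝ (Fin d)) ∈ unitCube d := fun _ => by simp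
  refine ⟨L * √d + |V 0| + B, Set.forall_mem_range.mpr fun ⟨x, hx⟩ => ?_⟩
  have hdist : dist x 0 ≤ √d := by
    simpa using dist_le_of_mem_euclideanBox zero_le_one (fun _ => (sub_zero _).le) hx hzero
  calc |V x - W x| ≤ |V x - V 0| + |V 0| + |W x| := by
        have := abs_sub_le (V x) (V 0) (W x)
        have := abs_sub (V 0) (W x)
        linarith
    _ ≤ L * √d + |V 0| + B := by
        gcongr
        · exact (hV x hx 0 hzero).trans (by gcongr)
        · exact hW x hx

lemma abs_sub_le_iSup_unitCube {d : ℕ} {V W : EuclideanSpace ℝ (Fin d) → ℝ}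
    (h : BddAbove (Set.range fun x : unitCube d => |V x - W x|)) :
    ∀ x ∈ unitCube d, |V x - W x| ≤ ⨆ x : unitCube d, |V x - W x| := fun x hx =>
  le_ciSup h ⟨x, hx⟩

lemma isLipschitzModel_of_rhoCube {d : ℕ} {A Ξ : Type*} [DecidableEq A]
    {ψ : EuclideanSpace ℝ (Fin d) → A → Ξ → EuclideanSpace ℝ (Fin d)}
    {r : A → EuclideanSpace ℝ (Fin d) → ℝ} {Vpi : EuclideanSpace ℝ (Fin d) → ℝ}
    {Lmax Lpsi Lpi : ℝ} (hmem : ∀ x ∈ unitCube d, ∀ a ξ, ψ x a ξ ∈ unitCube d)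
    (hr : ∀ a, ∀ x ∈ unitCube d, ∀ y ∈ unitCube d, |r a x - r a y| ≤ Lmax * dist x y)
    (hψ : ∀ ξ, ∀ p : EuclideanSpace ℝ (Fin d) × A, p.1 ∈ unitCube d →
      ∀ q : EuclideanSpace ℝ (Fin d) × A, q.1 ∈ unitCube d →
      dist (ψ p.1 p.2 ξ) (ψ q.1 q.2 ξ) ≤ Lpsi * rhoCube p q)
    (hVpi : ∀ ξ, ∀ p : EuclideanSpace ℝ (Fin d) × A, p.1 ∈ unitCube d →
      ∀ q : EuclideanSpace ℝ (Fin d) × A, q.1 ∈ unitCube d →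
      |Vpi (ψ p.1 p.2 ξ) - Vpi (ψ q.1 q.2 ξ)| ≤ Lpi * rhoCube p q) :
    IsLipschitzModel (unitCube d) ψ r Vpi Lmax Lpsi Lpi := by
  have hrho (x y : EuclideanSpace ℝ (Fin d)) (a : A) : rhoCube (x, a) (y, a) = dist x y := by
    simp [rhoCube]
  exact ⟨hmem, hr, fun a ξ x hx y hy => hrho x y a ▸ hψ ξ (x, a) hx (y, a) hy,
    fun a ξ x hx y hy => hrho x y a ▸ hVpi ξ (x, a) hx (y, a) hy⟩

lemma add_mul_div_one_sub_add_le {b q L : ℝ} (hL : 0 ≤ L) (hq : q < 1) :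
    b + q * (b / (1 - q) + L) ≤ b / (1 - q) + L := by
  have hfixed : b + q * (b / (1 - q)) = b / (1 - q) := by
    field_simp [(sub_pos.mpr hq).ne']
    ring
  have hqL : q * L ≤ L := mul_le_of_le_one_left hL hq.le
  linarith

variable {d : ℕ} {A Ξ : Type*} [Fintype A] [Nonempty A] [MeasurableSpace Ξ] {P : Measure Ξ}
  [IsProbabilityMeasure P]

open ProbabilityTheory in
lemma measure_pi_exists_lt_abs_empiricalError_castAdd_le {δ K : ℝ} (hd : 1 ≤ d) (hδ0 : 0 < δ)
    (hδ : δ ≤ 1 / 2) {f : A → EuclideanSpace ℝ (Fin d) → Ξ → ℝ} (hK : 0 < K)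
    (hf : ∀ a, ∀ x ∈ unitCube d, Measurable (f a x))
    (hbound : ∀ a, ∀ x ∈ unitCube d, ∀ z, |f a x z| ≤ K)
    (hlip : ∀ a, ∀ x ∈ unitCube d, ∀ y ∈ unitCube d, ∀ z, |f a x z - f a y z| ≤ K * dist x y)
    {M1 : ℕ} (hM1 : 1 ≤ M1) (M2 j : ℕ) :
    (Measure.pi fun _ : Fin (M1 + M2) => P) {ω | ∃ a, ∃ x ∈ unitCube d,
        32 * K * monteCarloRate d (δ / Fintype.card A) M1 * (j + 1) <
          |empiricalError P (f a x) fun l : Fin M1 => ω (Fin.castAdd M2 l)|} ≤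
      ENNReal.ofReal (δ / 2 * (1 / 2) ^ (j + 1)) := by
  have : NeZero M1 := ⟨by omega⟩
  have hlaw (l : Fin M1) : HasLaw (fun ω : Fin (M1 + M2) → Ξ => ω (Fin.castAdd M2 l)) P
      (Measure.pi fun _ => P) :=
    (measurePreserving_eval (fun _ => P) (Fin.castAdd M2 l)).hasLaw
  have hind : iIndepFun (fun (l : Fin M1) (ω : Fin (M1 + M2) → Ξ) => ω (Fin.castAdd M2 l))
      (Measure.pi fun _ => P) :=
    (iIndepFun_pi (X := fun _ => id) fun _ => aemeasurable_id).precomp (Fin.castAdd_injective M1 M2)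
  simpa only [Fintype.card_fin] using
    measure_exists_action_lt_abs_empiricalError_le hd hδ0 hδ hlaw hind hK hf hbound hlip j

theorem stmt_2_general [Nonempty Ξ]
    {ψ : EuclideanSpace ℝ (Fin d) → A → Ξ → EuclideanSpace ℝ (Fin d)}
    {r : A → EuclideanSpace ℝ (Fin d) → ℝ} {Vpi Vstar V0 : EuclideanSpace ℝ (Fin d) → ℝ}
    {γ Lmax Lpsi Lpi LV K B δ : ℝ} {N M1 M2 : ℕ} (hd : 1 ≤ d) (hγ0 : 0 ≤ γ) (hγ1 : γ < 1)
    (hmodel : IsLipschitzModel (unitCube d) ψ r Vpi Lmax Lpsi Lpi)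
    (hfix : IsBellmanFixedPoint P (unitCube d) ψ r γ Vstar)
    (hLV0 : 0 ≤ LV) (hLV : Lmax + 2 * γ * Lpi + γ * Lpsi * LV ≤ LV)
    (hV0 : ∀ x ∈ unitCube d, ∀ y ∈ unitCube d, |V0 x - V0 y| ≤ LV * dist x y)
    (hVpi : ∀ x ∈ unitCube d, ∀ a, Measurable fun ξ => Vpi (ψ x a ξ))
    (hK : 0 < K) (hVpiK : ∀ x ∈ unitCube d, |Vpi x| ≤ K) (hLpiK : Lpi ≤ K)
    (hVstar : ∀ x ∈ unitCube d, |Vstar x| ≤ B)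
    (hN : 2 ≤ N) (hM1 : 1 ≤ M1) (hM2 : 1 ≤ M2) (k : ℕ) (hδ0 : 0 < δ) (hδ : δ < 1 / 2) :
    ENNReal.ofReal (1 - δ) ≤
      ((Measure.pi fun _ : Fin N => volume.restrict (unitCube d)).prod
        (Measure.pi fun _ : Fin k => Measure.pi fun _ : Fin (M1 + M2) => P))
        {ω | ∀ x ∈ unitCube d,
          |uvipIter ψ r γ Vpi M1 M2 LV ω.1 V0 k (extendSamples k (M1 + M2) ω.2) x - Vstar x| ≤
            uvipConstant γ LV K * (γ ^ k * (⨆ x : unitCube d, |V0 x - Vstar x|) +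
              (⨆ x : unitCube d, |Vpi x - Vstar x|) +
              monteCarloRate d (δ / Fintype.card A) M1 + designRate d N δ)} := by
  have : NeZero N := ⟨by omega⟩
  have hQ (x) (hx : x ∈ unitCube d) (a) (ξ) : |Vpi (ψ x a ξ)| ≤ K :=
    hVpiK _ (hmodel.next_mem x hx a ξ)
  have hsampling := measure_pi_exists_lt_abs_empiricalError_castAdd_le (P := P) hd hδ0 hδ.le
    (f := fun a x ξ => Vpi (ψ x a ξ)) hK (fun a x hx => hVpi x hx a) (fun a x hx => hQ x hx a)
    (fun a x hx y hy ξ => (hmodel.abs_control_sub_le a ξ x hx y hy).trans (by gcongr)) hM1 M2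
  refine ofReal_one_sub_le_measure hδ0.le <| (measure_mono fun ω hω => ?_).trans <|
    (measure_prod_pi_union_iUnion_le (half_pos hδ0).le
      (measure_pi_not_isInternalCover_designRate_le hd hN hδ0 hδ) hsampling k).trans_eq
        (by rw [add_halves])
  contrapose! hω
  rw [Set.notMem_compl_iff]
  simp only [Set.mem_union, Set.mem_iUnion, Set.mem_preimage, Set.mem_ofPred_eq, not_or, not_exists,
    not_and, not_not, not_lt] at hω
  obtain ⟨hcover, hsamples⟩ := hω
  have hT : 0 ≤ monteCarloRate d (δ / Fintype.card A) M1 := Real.sqrt_nonneg _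
  have hz : 0 ≤ designRate d N δ := designRate_nonneg d N hδ0 (by linarith)
  have hE0 : 0 ≤ ⨆ x : unitCube d, |V0 x - Vstar x| := Real.iSup_nonneg fun _ => abs_nonneg _
  have hD0 : 0 ≤ ⨆ x : unitCube d, |Vpi x - Vstar x| := Real.iSup_nonneg fun _ => abs_nonneg _
  have herror := abs_uvipIter_sub_le hmodel hfix hγ0 hγ1
    (fun x hx a => integrable_of_abs_le (hVpi x hx a) (hQ x hx a)) hLV0 hLV hV0
    (abs_sub_le_iSup_unitCube (bddAbove_range_abs_sub hLV0 hV0 hVstar)) hD0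
    (abs_sub_le_iSup_unitCube ⟨K + B, Set.forall_mem_range.mpr fun x =>
      (abs_sub _ _).trans (add_le_add (hVpiK x x.2) (hVstar x x.2))⟩) (by positivity) hcover hM1 hM2
    (ω := extendSamples k (M1 + M2) ω.2)
    (G := 32 * K * monteCarloRate d (δ / Fintype.card A) M1) (by positivity) (k := k)
    fun i hi x hx a => by
      simpa only [← extendSamples_castAdd] using hsamples ⟨i, hi⟩ a x hx
  exact fun x hx => (herror x hx).trans <|
    error_terms_le_uvipConstant_mul hγ1 hLV0 hK.le (by positivity) hD0 hT hz

end Assembly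

/-- Corollary 2: `X = [0,1]^d`, finite action space, i.i.d. uniform design
points. With probability at least `1 - δ` (over design points and all samples),
`sup_x |V̂_k^up(x) - V*(x)| ≤ C [ γ^k ‖V̂_0^up - V*‖ + ‖V^π - V*‖ +
√(d log(d|A|/δ)/M₁) + √d (N⁻¹ log(1/δ) log N)^{1/d} ]` with `C` depending only on
`γ, L_max, L_ψ, L_π, L₀, R_max`. -/
theorem stmt_2 (γ Lmax Lpsi Lpi L0 Rmax : ℝ)
    (hγ0 : 0 < γ) (hγ1 : γ < 1) (hLmax : 0 ≤ Lmax) (hLpsi0 : 0 < Lpsi)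
    (hLpsi1 : Lpsi ≤ 1) (hLpi : 0 ≤ Lpi) (hL0 : 0 ≤ L0) (hR : 0 < Rmax) :
    ∃ C : ℝ, 0 < C ∧
      ∀ (d : ℕ), 1 ≤ d →
      ∀ (A Ξ : Type) [Fintype A] [Nonempty A] [DecidableEq A] [MeasurableSpace A] [MeasurableSingletonClass A]
        [MeasurableSpace Ξ] [Nonempty Ξ]
        (P : Measure Ξ) [IsProbabilityMeasure P]
        (ψ : EuclideanSpace ℝ (Fin d) → A → Ξ → EuclideanSpace ℝ (Fin d)),
        Measurable (fun pr : (EuclideanSpace ℝ (Fin d) × A) × Ξ =>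
          ψ pr.1.1 pr.1.2 pr.2) →
        (∀ x ∈ unitCube d, ∀ (a : A) (ξ : Ξ), ψ x a ξ ∈ unitCube d) →
      ∀ (r : A → EuclideanSpace ℝ (Fin d) → ℝ),
        (∀ (a : A), ∀ x ∈ unitCube d, |r a x| ≤ Rmax) →
      ∀ (Vpi : EuclideanSpace ℝ (Fin d) → ℝ), Measurable Vpi →
        (∀ x ∈ unitCube d, |Vpi x| ≤ Rmax / (1 - γ)) →
        -- A4 on the cube, for the metric ρ((x,a),(x',a')) = ‖x-x'‖ + 1{a≠a'}
        (∀ (a : A), ∀ x ∈ unitCube d, ∀ x' ∈ unitCube d,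
          |r a x - r a x'| ≤ Lmax * dist x x') →
        (∀ (ξ : Ξ), ∀ p : EuclideanSpace ℝ (Fin d) × A, p.1 ∈ unitCube d →
          ∀ q : EuclideanSpace ℝ (Fin d) × A, q.1 ∈ unitCube d →
          dist (ψ p.1 p.2 ξ) (ψ q.1 q.2 ξ) ≤ Lpsi * rhoCube p q) →
        (∀ (ξ : Ξ), ∀ p : EuclideanSpace ℝ (Fin d) × A, p.1 ∈ unitCube d →
          ∀ q : EuclideanSpace ℝ (Fin d) × A, q.1 ∈ unitCube d →
          |Vpi (ψ p.1 p.2 ξ) - Vpi (ψ q.1 q.2 ξ)| ≤ Lpi * rhoCube p q) →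
      ∀ (Vstar : EuclideanSpace ℝ (Fin d) → ℝ), Measurable Vstar →
        (∃ B : ℝ, ∀ x, |Vstar x| ≤ B) →
        (∀ x ∈ unitCube d, Vstar x = ⨆ a : A, (r a x + γ * ∫ ξ, Vstar (ψ x a ξ) ∂P)) →
      ∀ (V0 : EuclideanSpace ℝ (Fin d) → ℝ),
        (∀ x ∈ unitCube d, ∀ x' ∈ unitCube d, |V0 x - V0 x'| ≤ L0 * dist x x') →
      ∀ (N M1 M2 : ℕ), 2 ≤ N → 1 ≤ M1 → 1 ≤ M2 →
      ∀ (k : ℕ) (δ : ℝ), 0 < δ → δ < 1 / 2 →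
        ENNReal.ofReal (1 - δ) ≤
          ((Measure.pi fun _ : Fin N => volume.restrict (unitCube d)).prod
            (Measure.pi fun _ : Fin k => Measure.pi fun _ : Fin (M1 + M2) => P))
            {ω : (Fin N → EuclideanSpace ℝ (Fin d)) ×
                (Fin k → Fin (M1 + M2) → Ξ) |
              ∀ x ∈ unitCube d,
                |uvipIter ψ r γ Vpi M1 M2
                    ((Lmax + 2 * γ * Lpi) / (1 - γ * Lpsi) + L0) ω.1 V0
                    k (extendSamples k (M1 + M2) ω.2) x - Vstar x| ≤
                  C * (γ ^ k * (⨆ x' : unitCube d, |V0 x' - Vstar x'|) +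
                    (⨆ x' : unitCube d, |Vpi x' - Vstar x'|) +
                    Real.sqrt ((d : ℝ) *
                      Real.log ((d : ℝ) * (Fintype.card A : ℝ) / δ) / M1) +
                    Real.sqrt d *
                      (Real.log (1 / δ) * Real.log N / N) ^ (1 / (d : ℝ)))} := by
  have hq : γ * Lpsi < 1 := (mul_le_of_le_one_right hγ0.le hLpsi1).trans_lt hγ1
  have hslope : 0 ≤ (Lmax + 2 * γ * Lpi) / (1 - γ * Lpsi) :=
    div_nonneg (by positivity) (sub_pos.mpr hq).le
  have hR' : 0 < Rmax / (1 - γ) := div_pos hR (sub_pos.mpr hγ1)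
  refine ⟨uvipConstant γ ((Lmax + 2 * γ * Lpi) / (1 - γ * Lpsi) + L0) (Rmax / (1 - γ) + Lpi),
    uvipConstant_pos hγ1 (by positivity) (by positivity), ?_⟩
  intro d hd A Ξ _ _ _ _ _ _ _ P _ ψ hψ hmem r _ Vpi hVpi hVpiR hrlip hψlip hVpilip Vstar
    hVstar ⟨B, hB⟩ hbellman V0 hV0 N M1 M2 hN hM1 hM2 k δ hδ0 hδ
  have hnext (x) (a : A) : Measurable (ψ x a) := hψ.comp (measurable_prodMk_left (x := (x, a)))
  have hfix : IsBellmanFixedPoint P (unitCube d) ψ r γ Vstar :=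
    ⟨fun x _ a => integrable_of_abs_le (hVstar.comp (hnext x a)) fun _ => hB _, hbellman⟩
  simpa only [monteCarloRate, designRate, div_div_eq_mul_div] using
    stmt_2_general hd hγ0.le hγ1 (isLipschitzModel_of_rhoCube hmem hrlip hψlip hVpilip) hfix
      (by positivity) (add_mul_div_one_sub_add_le hL0 hq)
      (fun x hx y hy => (hV0 x hx y hy).trans (by gcongr; linarith))
      (fun x _ a => hVpi.comp (hnext x a)) (by positivity)
      (fun x hx => (hVpiR x hx).trans (by linarith)) (le_add_of_nonneg_left hR'.le)
      (fun x _ => hB x) hN hM1 hM2 k hδ0 hδ
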